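/- Let V = [V_1,…,V_N] (N ≥ 2) be a row-isometry of dilation type on a Hilbert space K. Let Q be the orthogonal projection of K onto the orthogonal complement of the closed linear span of the wandering vectors of V (the structure projection of the free semigroup algebra generated by V), and let 𝒱 = QK. Then for every nonzero vector v ∈ 𝒱 there exists a word w over {1,…,N} such that V_wv ∉ 𝒱. -/

import Mathlib

noncomputable section

open scoped InnerProductSpace ComplexInnerProductSpace Classical

section GeneralDefs

variable {E : Type*} [NormedAddCommGroup E] [InnerProductSpace ℂ E]

/-- The operator associated to a word: `wordOp V [a₁, …, a_r] = V a₁ * ⋯ * V a_r`. -/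
def wordOp {ι : Type*} (V : ι → E →L[ℂ] E) (w : List ι) : E →L[ℂ] E :=
  (w.map V).prod

/-- The operator associated to a word of fixed length `k` given as a function `Fin k → ι`. -/
def fnWordOp {ι : Type*} {k : ℕ} (V : ι → E →L[ℂ] E) (u : Fin k → ι) : E →L[ℂ] E :=
  wordOp V (List.ofFn u)

/-- The closure of a set of operators in the weak operator topology, described via
basic WOT-neighbourhoods (finitely many vector functionals). -/
def wotClosure (S : Set (E →L[ℂ] E)) : Set (E →L[ℂ] E) :=
  {A | ∀ ε > (0 : ℝ), ∀ F : Finset (E × E), ∃ B ∈ S, ∀ p ∈ F, ‖⟪p.1, (A - B) p.2⟫‖ < ε}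

/-- The unital WOT-closed algebra generated by a set of operators. -/
def genWotAlg (G : Set (E →L[ℂ] E)) : Set (E →L[ℂ] E) :=
  wotClosure ((Algebra.adjoin ℂ G : Subalgebra ℂ (E →L[ℂ] E)) : Set (E →L[ℂ] E))

/-- A wandering vector for a row-isometry `V = [V_a : a ∈ ι]`: a unit vector whose orbit
under all words in the `V_a` is an orthonormal family. -/
def IsWandering {ι : Type*} (V : ι → E →L[ℂ] E) (ζ : E) : Prop :=
  ‖ζ‖ = 1 ∧ ∀ w w' : List ι,
    ⟪wordOp V w ζ, wordOp V w' ζ⟫ = if w = w' then 1 else 0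

/-- Restriction of an operator to an invariant subspace (junk value `0` if not invariant). -/
def restrictCLM (A : E →L[ℂ] E) (M : Submodule ℂ E) : M →L[ℂ] M :=
  if h : ∀ x ∈ M, A x ∈ M then
    { toFun := fun x => ⟨A x, h x x.2⟩
      map_add' := by intro x y; ext; simp
      map_smul' := by intro c x; ext; simp
      cont := Continuous.subtype_mk (A.continuous.comp continuous_subtype_val) _ }
  else 0

/-- The unital WOT-closed algebra on `M` generated by the restrictions of the `V a` to `M`. -/
def rowAlgOn {ι : Type*} (V : ι → E →L[ℂ] E) (M : Submodule ℂ E) : Set (M →L[ℂ] M) :=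
  genWotAlg (Set.range fun a => restrictCLM (V a) M)

/-- The unital WOT-closed algebra on `M` generated by the restrictions of the `V a`
is self-adjoint. -/
def restrictedAlgSelfAdjoint {ι : Type*} (V : ι → E →L[ℂ] E) (M : Submodule ℂ E) : Prop :=
  ∀ A ∈ rowAlgOn V M, ∃ B ∈ rowAlgOn V M,
    ∀ x y : M, ⟪((A x : M) : E), (y : E)⟫ = ⟪(x : E), ((B y : M) : E)⟫

variable [CompleteSpace E]

/-- A row-isometry is of dilation type if it is defect free and has no nonzero reducing
subspace on which it is either absolutely continuous (spanned by wandering vectors) or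
singular (generating a self-adjoint WOT-closed algebra). -/
def IsDilationType {ι : Type*} [Fintype ι] (V : ι → E →L[ℂ] E) : Prop :=
  (∑ a, V a * star (V a)) = 1 ∧
    ¬ ∃ M : Submodule ℂ E, M ≠ ⊥ ∧ IsClosed (M : Set E) ∧
      (∀ a, ∀ x ∈ M, V a x ∈ M) ∧ (∀ a, ∀ x ∈ M, star (V a) x ∈ M) ∧
      ((M = (Submodule.span ℂ {ζ : E | ζ ∈ M ∧ IsWandering V ζ}).topologicalClosure) ∨
        restrictedAlgSelfAdjoint V M)

end GeneralDefs

/-- An isometric representation of the single-vertex 2-graph `F_θ⁺` on a Hilbert space `H`. -/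
structure TwoGraphRep (m n : ℕ) (θ : Equiv.Perm (Fin m × Fin n)) (H : Type*)
    [NormedAddCommGroup H] [InnerProductSpace ℂ H] [CompleteSpace H] where
  S : Fin m → H →L[ℂ] H
  T : Fin n → H →L[ℂ] H
  isometS : ∀ i i', star (S i) * S i' = if i = i' then 1 else 0
  isometT : ∀ j j', star (T j) * T j' = if j = j' then 1 else 0
  comm : ∀ i j, S i * T j = T (θ (i, j)).2 * S (θ (i, j)).1

namespace TwoGraphRep

variable {m n : ℕ} {θ : Equiv.Perm (Fin m × Fin n)} {H : Type*}
  [NormedAddCommGroup H] [InnerProductSpace ℂ H] [CompleteSpace H]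

/-- A representation is of Cuntz type if both row-isometries are defect free. -/
def CuntzType (ρ : TwoGraphRep m n θ H) : Prop :=
  (∑ i, ρ.S i * star (ρ.S i)) = 1 ∧ (∑ j, ρ.T j * star (ρ.T j)) = 1

/-- The nonself-adjoint 2-graph algebra `𝔖`: the unital WOT-closed algebra generated by
the `S_i` and `T_j`. -/
def alg (ρ : TwoGraphRep m n θ H) : Set (H →L[ℂ] H) :=
  genWotAlg (Set.range ρ.S ∪ Set.range ρ.T)

/-- The von Neumann algebra generated by the `S_i` and `T_j`: the WOT-closure of the
unital *-algebra they generate. -/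
def vnAlg (ρ : TwoGraphRep m n θ H) : Set (H →L[ℂ] H) :=
  genWotAlg ((Set.range ρ.S ∪ Set.range ρ.T) ∪ star '' (Set.range ρ.S ∪ Set.range ρ.T))

/-- Wandering vector for the row-isometry `[S_u T_v : |u| = k, |v| = l]`. -/
def IsWanderingKL (ρ : TwoGraphRep m n θ H) (k l : ℕ) (ζ : H) : Prop :=
  ‖ζ‖ = 1 ∧ ∀ (p p' : ℕ) (u u' : List (Fin m)) (v v' : List (Fin n)),
    u.length = p * k → v.length = p * l → u'.length = p' * k → v'.length = p' * l →
    ⟪(wordOp ρ.S u * wordOp ρ.T v) ζ, (wordOp ρ.S u' * wordOp ρ.T v') ζ⟫ =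
      if u = u' ∧ v = v' then 1 else 0

/-- The range of the structure projection `P_{k,l}`: the orthogonal complement of the
closed linear span of the wandering vectors of `[S_u T_v : |u| = k, |v| = l]`. -/
def structSpaceKL (ρ : TwoGraphRep m n θ H) (k l : ℕ) : Submodule ℂ H :=
  ((Submodule.span ℂ {ζ : H | ρ.IsWanderingKL k l ζ}).topologicalClosure)ᗮ

/-- The range of the first structure projection `P = ⋀_{k,l>0} P_{k,l}`. -/
def firstStructSpace (ρ : TwoGraphRep m n θ H) : Submodule ℂ H :=
  ⨅ (k : ℕ) (l : ℕ) (_ : 0 < k) (_ : 0 < l), ρ.structSpaceKL k l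

/-- The row-isometry `[S_u T_v : |u| = k, |v| = l]`. -/
def rowKL (ρ : TwoGraphRep m n θ H) (k l : ℕ) :
    ((Fin k → Fin m) × (Fin l → Fin n)) → H →L[ℂ] H :=
  fun p => fnWordOp ρ.S p.1 * fnWordOp ρ.T p.2

/-- A wandering vector for the representation `(S,T)`. -/
def IsWanderingRep (ρ : TwoGraphRep m n θ H) (ζ : H) : Prop :=
  ‖ζ‖ = 1 ∧ ∀ (u u' : List (Fin m)) (v v' : List (Fin n)),
    ⟪(wordOp ρ.S u * wordOp ρ.T v) ζ, (wordOp ρ.S u' * wordOp ρ.T v') ζ⟫ =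
      if u = u' ∧ v = v' then 1 else 0

/-- The representation is irreducible: the only closed subspaces invariant under all
`S_i, T_j, S_i*, T_j*` are `⊥` and `⊤`. -/
def Irreducible (ρ : TwoGraphRep m n θ H) : Prop :=
  ∀ M : Submodule ℂ H, IsClosed (M : Set H) →
    (∀ i, ∀ x ∈ M, ρ.S i x ∈ M) → (∀ i, ∀ x ∈ M, star (ρ.S i) x ∈ M) →
    (∀ j, ∀ x ∈ M, ρ.T j x ∈ M) → (∀ j, ∀ x ∈ M, star (ρ.T j) x ∈ M) →
    M = ⊥ ∨ M = ⊤

/-- The representation is atomic with standard basis `ξ`: every generator maps each basis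
vector to a unimodular multiple of a basis vector. -/
def AtomicBasis {Λ : Type*} (ρ : TwoGraphRep m n θ H) (ξ : HilbertBasis Λ ℂ H) : Prop :=
  (∀ i t, ∃ (c : ℂ) (t' : Λ), ‖c‖ = 1 ∧ ρ.S i (ξ t) = c • ξ t') ∧
  (∀ j t, ∃ (c : ℂ) (t' : Λ), ‖c‖ = 1 ∧ ρ.T j (ξ t) = c • ξ t')

/-- `x` has a blue ring: `S_u x ∈ 𝕋x` for some nonempty word `u`. -/
def HasBlueRing (ρ : TwoGraphRep m n θ H) (x : H) : Prop :=
  ∃ u : List (Fin m), u ≠ [] ∧ ∃ c : ℂ, ‖c‖ = 1 ∧ wordOp ρ.S u x = c • x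

/-- `x` has a red ring: `T_v x ∈ 𝕋x` for some nonempty word `v`. -/
def HasRedRing (ρ : TwoGraphRep m n θ H) (x : H) : Prop :=
  ∃ v : List (Fin n), v ≠ [] ∧ ∃ c : ℂ, ‖c‖ = 1 ∧ wordOp ρ.T v x = c • x

/-- `x` has a mixed ring: `T_v S_u x ∈ 𝕋x` for some nonempty words `u`, `v`. -/
def HasMixedRing (ρ : TwoGraphRep m n θ H) (x : H) : Prop :=
  ∃ (u : List (Fin m)) (v : List (Fin n)), u ≠ [] ∧ v ≠ [] ∧
    ∃ c : ℂ, ‖c‖ = 1 ∧ wordOp ρ.T v (wordOp ρ.S u x) = c • x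

end TwoGraphRep
/-! ### Square-summability bounds -/

section SquareSums

/-- `L2Le c r` says that the family `c` is square-summable with `ℓ²`-norm at most `r`. -/
def L2Le {α : Type*} (c : α → ℂ) (r : ℝ) : Prop :=
  0 ≤ r ∧ ∀ F : Finset α, ∑ w ∈ F, ‖c w‖ ^ 2 ≤ r ^ 2

variable {α β : Type*} {c d : α → ℂ} {r s : ℝ}

lemma L2Le.mono (h : L2Le c r) (hrs : r ≤ s) : L2Le c s :=
  ⟨h.1.trans hrs, fun F => (h.2 F).trans (pow_le_pow_left₀ h.1 hrs 2)⟩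

lemma L2Le.of_norm_le (h : L2Le c r) (hd : ∀ w, ‖d w‖ ≤ ‖c w‖) : L2Le d r :=
  ⟨h.1, fun F => (Finset.sum_le_sum fun w _ =>
    pow_le_pow_left₀ (norm_nonneg _) (hd w) 2).trans (h.2 F)⟩

lemma L2Le.norm_le (h : L2Le c r) (w : α) : ‖c w‖ ≤ r := by
  have := h.2 {w}
  rw [Finset.sum_singleton] at this
  exact (sq_le_sq₀ (norm_nonneg _) h.1).1 this

lemma L2Le.zero : L2Le (fun _ : α => 0) 0 := ⟨le_rfl, fun F => by simp⟩

lemma L2Le.add (hc : L2Le c r) (hd : L2Le d s) : L2Le (fun w => c w + d w) (r + s) := by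
  refine ⟨add_nonneg hc.1 hd.1, fun F => ?_⟩
  have hcs : (∑ w ∈ F, ‖c w‖ * ‖d w‖) ≤ r * s := by
    refine abs_le_of_sq_le_sq' ?_ (mul_nonneg hc.1 hd.1) |>.2
    calc (∑ w ∈ F, ‖c w‖ * ‖d w‖) ^ 2
        ≤ (∑ w ∈ F, ‖c w‖ ^ 2) * ∑ w ∈ F, ‖d w‖ ^ 2 := Finset.sum_mul_sq_le_sq_mul_sq _ _ _
      _ ≤ r ^ 2 * s ^ 2 := mul_le_mul (hc.2 F) (hd.2 F)
          (Finset.sum_nonneg fun _ _ => sq_nonneg _) (sq_nonneg _)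
      _ = (r * s) ^ 2 := by ring
  calc ∑ w ∈ F, ‖c w + d w‖ ^ 2
      ≤ ∑ w ∈ F, (‖c w‖ ^ 2 + 2 * (‖c w‖ * ‖d w‖) + ‖d w‖ ^ 2) := by
        refine Finset.sum_le_sum fun w _ => ?_
        calc ‖c w + d w‖ ^ 2 ≤ (‖c w‖ + ‖d w‖) ^ 2 :=
              pow_le_pow_left₀ (norm_nonneg _) (norm_add_le _ _) 2
          _ = _ := by ring
    _ = ∑ w ∈ F, ‖c w‖ ^ 2 + 2 * ∑ w ∈ F, ‖c w‖ * ‖d w‖ + ∑ w ∈ F, ‖d w‖ ^ 2 := by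
        rw [Finset.sum_add_distrib, Finset.sum_add_distrib, Finset.mul_sum]
    _ ≤ (r + s) ^ 2 := by nlinarith [hc.2 F, hd.2 F]

lemma L2Le.const_mul (hc : L2Le c r) (t : ℂ) : L2Le (fun w => t * c w) (‖t‖ * r) := by
  refine ⟨mul_nonneg (norm_nonneg _) hc.1, fun F => ?_⟩
  simp only [norm_mul, mul_pow, ← Finset.mul_sum]
  exact mul_le_mul_of_nonneg_left (hc.2 F) (sq_nonneg _)

lemma L2Le.neg (hc : L2Le c r) : L2Le (fun w => -c w) r :=
  hc.of_norm_le fun _ => (norm_neg _).le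

lemma L2Le.sub (hc : L2Le c r) (hd : L2Le d s) : L2Le (fun w => c w - d w) (r + s) := by
  simpa only [sub_eq_add_neg] using hc.add hd.neg

lemma L2Le.sum {κ : Type*} (F : Finset κ) {c : κ → α → ℂ} {r : κ → ℝ}
    (h : ∀ i ∈ F, L2Le (c i) (r i)) : L2Le (fun w => ∑ i ∈ F, c i w) (∑ i ∈ F, r i) := by
  induction F using Finset.induction_on with
  | empty => simpa using L2Le.zero
  | insert i F hi ih =>
    simp only [Finset.sum_insert hi]
    exact (h i (Finset.mem_insert_self _ _)).add
      (ih fun j hj => h j (Finset.mem_insert_of_mem hj))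

lemma L2Le.comp_injective (hc : L2Le c r) {f : β → α} (hf : Function.Injective f) :
    L2Le (fun w => c (f w)) r := by
  refine ⟨hc.1, fun F => ?_⟩
  simpa using hc.2 (F.map ⟨f, hf⟩)

lemma L2Le.tsum_le (hc : L2Le c r) : ∑' w, ‖c w‖ ^ 2 ≤ r ^ 2 :=
  Real.tsum_le_of_sum_le (fun _ => sq_nonneg _) hc.2

lemma L2Le.summable (hc : L2Le c r) : Summable fun w => ‖c w‖ ^ 2 :=
  summable_of_sum_le (fun _ => sq_nonneg _) hc.2

/-- The tails of a square-summable family are small. -/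
lemma L2Le.exists_tail (hc : L2Le c r) {ε : ℝ} (hε : 0 < ε) :
    ∃ F : Finset α, L2Le (fun w => if w ∈ F then 0 else c w) ε := by
  obtain ⟨F, hF⟩ := summable_iff_vanishing_norm.1 hc.summable (ε ^ 2) (by positivity)
  refine ⟨F, hε.le, fun G => ?_⟩
  have h1 : ∑ w ∈ G, ‖if w ∈ F then 0 else c w‖ ^ 2 = ∑ w ∈ G \ F, ‖c w‖ ^ 2 := by
    rw [Finset.sdiff_eq_filter, Finset.sum_filter]
    refine Finset.sum_congr rfl fun w _ => ?_
    by_cases hw : w ∈ F <;> simp [hw]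
  rw [h1]
  exact (le_abs_self _).trans (hF _ Finset.sdiff_disjoint).le

/-- A family on words supported on the empty word and the words starting with `a`. -/
lemma L2Le.cons {ι : Type*} {f g : List ι → ℂ} (a : ι) (hg : L2Le g r)
    (h0 : ‖f []‖ ≤ s) (hf : ∀ b w, f (b :: w) = if b = a then g w else 0) :
    L2Le f (r + s) := by
  have hs : 0 ≤ s := (norm_nonneg _).trans h0
  have h1 : L2Le (fun w : List ι => if w = [] then f [] else 0) s := by
    refine ⟨hs, fun F => ?_⟩
    calc ∑ w ∈ F, ‖if w = [] then f [] else 0‖ ^ 2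
        = ∑ w ∈ F, if w = [] then ‖f []‖ ^ 2 else 0 :=
          Finset.sum_congr rfl fun _ _ => by split_ifs <;> simp
      _ ≤ ‖f []‖ ^ 2 := by
          rw [Finset.sum_ite_eq']
          split_ifs
          · exact le_rfl
          · positivity
      _ ≤ s ^ 2 := pow_le_pow_left₀ (norm_nonneg _) h0 2
  have h2 : L2Le (fun w : List ι => if w = [] then 0 else f w) r := by
    refine ⟨hg.1, fun F => ?_⟩
    have hinj : Function.Injective (fun w : List ι => a :: w) := fun _ _ h => by simpa using h
    calc ∑ w ∈ F, ‖if w = [] then 0 else f w‖ ^ 2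
        ≤ ∑ w ∈ (F.image List.tail).map ⟨_, hinj⟩, ‖if w = [] then 0 else f w‖ ^ 2 := by
          rw [← Finset.sum_filter_ne_zero]
          refine Finset.sum_le_sum_of_subset_of_nonneg (fun w hw => ?_)
            fun _ _ _ => sq_nonneg _
          obtain ⟨hw, hne⟩ := Finset.mem_filter.1 hw
          match w with
          | [] => simp at hne
          | b :: w =>
            have hb : b = a := by
              by_contra hb
              simp [hf, hb] at hne
            subst hb
            simp only [Finset.mem_map, Finset.mem_image, Function.Embedding.coeFn_mk]
            exact ⟨w, ⟨_, hw, rfl⟩, rfl⟩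
      _ = ∑ w ∈ F.image List.tail, ‖g w‖ ^ 2 := by simp [hf]
      _ ≤ r ^ 2 := hg.2 _
  refine (h2.add h1).of_norm_le fun w => ?_
  by_cases hw : w = [] <;> simp [hw]

end SquareSums
/-! ### Row-isometries -/

section RowIsometries

variable {ι H : Type*} [NormedAddCommGroup H] [InnerProductSpace ℂ H]

/-- The operators `V a` are isometries with pairwise orthogonal ranges. -/
def IsRowIsometry (V : ι → H →L[ℂ] H) : Prop :=
  ∀ a b x y, ⟪V a x, V b y⟫ = if a = b then ⟪x, y⟫ else 0

/-- A vector `y` such that `z ↦ (⟪V_w y, z⟫)_w` is bounded from `H` to `ℓ²`. -/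
def IsBessel (V : ι → H →L[ℂ] H) (y : H) : Prop :=
  ∃ C, 0 ≤ C ∧ ∀ z, L2Le (fun w => ⟪wordOp V w y, z⟫) (C * ‖z‖)

variable {V : ι → H →L[ℂ] H}

@[simp] lemma wordOp_nil (x : H) : wordOp V [] x = x := by simp [wordOp]

@[simp] lemma wordOp_cons (a : ι) (w : List ι) (x : H) :
    wordOp V (a :: w) x = V a (wordOp V w x) := by simp [wordOp]

lemma wordOp_append (u w : List ι) (x : H) :
    wordOp V (u ++ w) x = wordOp V u (wordOp V w x) := by
  simp [wordOp]

lemma wordOp_mem {L : Submodule ℂ H} (hL : ∀ a, ∀ x ∈ L, V a x ∈ L) (w : List ι) {x : H}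
    (hx : x ∈ L) : wordOp V w x ∈ L := by
  induction w with
  | nil => simpa
  | cons a w ih => simpa using hL a _ ih

lemma IsRowIsometry.norm_apply (hV : IsRowIsometry V) (a : ι) (x : H) : ‖V a x‖ = ‖x‖ := by
  have := hV a a x x
  simp only [if_true, inner_self_eq_norm_sq_to_K] at this
  exact (sq_eq_sq₀ (norm_nonneg _) (norm_nonneg _)).1 (by exact_mod_cast this)

lemma IsRowIsometry.norm_wordOp (hV : IsRowIsometry V) (w : List ι) (x : H) :
    ‖wordOp V w x‖ = ‖x‖ := by
  induction w with
  | nil => simp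
  | cons a w ih => simp [hV.norm_apply, ih]

/-- A unit vector orthogonal to all its proper translates is wandering. -/
lemma IsRowIsometry.isWandering (hV : IsRowIsometry V) {x : H} (h1 : ‖x‖ = 1)
    (hx : ∀ a w, ⟪x, wordOp V (a :: w) x⟫ = 0) : IsWandering V x := by
  refine ⟨h1, fun w => ?_⟩
  induction w with
  | nil =>
    intro w'
    match w' with
    | [] => simp [h1]
    | a :: w' => simpa using hx a w'
  | cons a w ih =>
    intro w'
    match w' with
    | [] =>
      rw [← inner_conj_symm, wordOp_nil, hx]
      simp
    | b :: w' =>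
      rw [wordOp_cons, wordOp_cons, hV, ih]
      by_cases hab : a = b <;> simp [hab]

/-- The orthonormal orbit of a wandering vector satisfies Bessel's inequality. -/
lemma IsWandering.l2Le {x : H} (hx : IsWandering V x) (z : H) :
    L2Le (fun w => ⟪wordOp V w x, z⟫) ‖z‖ := by
  refine ⟨norm_nonneg _, fun F => ?_⟩
  have ho : Orthonormal ℂ fun w => wordOp V w x := by
    rw [orthonormal_iff_ite]
    exact hx.2
  exact ho.sum_inner_products_le z

lemma isBessel_zero : IsBessel V (0 : H) :=
  ⟨0, le_rfl, fun z => by simpa using L2Le.zero⟩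

lemma IsBessel.add {x y : H} (hx : IsBessel V x) (hy : IsBessel V y) : IsBessel V (x + y) := by
  obtain ⟨C, hC, hCx⟩ := hx
  obtain ⟨D, hD, hDy⟩ := hy
  refine ⟨C + D, by positivity, fun z => ?_⟩
  simpa [inner_add_left, add_mul] using (hCx z).add (hDy z)

lemma IsBessel.smul {x : H} (hx : IsBessel V x) (t : ℂ) : IsBessel V (t • x) := by
  obtain ⟨C, hC, hCx⟩ := hx
  refine ⟨‖t‖ * C, by positivity, fun z => ?_⟩
  simpa only [map_smul, inner_smul_left, mul_assoc, RCLike.norm_conj]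
    using (hCx z).const_mul (starRingEnd ℂ t)

lemma IsBessel.translate {x : H} (hx : IsBessel V x) (v : List ι) : IsBessel V (wordOp V v x) := by
  obtain ⟨C, hC, hCx⟩ := hx
  refine ⟨C, hC, fun z => ?_⟩
  simpa only [wordOp_append] using (hCx z).comp_injective (List.append_left_injective v)

/-- The subspace of Bessel vectors. -/
def besselSubmodule (V : ι → H →L[ℂ] H) : Submodule ℂ H where
  carrier := {x | IsBessel V x}
  add_mem' := IsBessel.add
  zero_mem' := isBessel_zero
  smul_mem' t _ hx := IsBessel.smul hx t

/-- Translates of a Bessel vector by long words have small coefficients. -/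
lemma IsBessel.eventually_l2Le {x : H} (hx : IsBessel V x) (z : H) {v : ℕ → List ι}
    (hv : ∀ k, k < (v k).length) {ε : ℝ} (hε : 0 < ε) :
    ∀ᶠ k in Filter.atTop, L2Le (fun w => ⟪wordOp V w (wordOp V (v k) x), z⟫) ε := by
  obtain ⟨C, -, hC⟩ := hx
  obtain ⟨F, hF⟩ := (hC z).exists_tail hε
  filter_upwards [Filter.eventually_ge_atTop (F.sup List.length)] with k hk
  refine (hF.comp_injective (List.append_left_injective (v k))).of_norm_le fun w => ?_
  have hw : w ++ v k ∉ F := fun h => by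
    have h1 : (w ++ v k).length ≤ F.sup List.length := Finset.le_sup (f := List.length) h
    have := hv k
    rw [List.length_append] at h1
    omega
  simp [hw, wordOp_append]

/-- Coefficients against `V_u b`, in terms of the coefficients against `b`. -/
lemma IsRowIsometry.l2Le_wordOp (hV : IsRowIsometry V) {x b : H} {κ : ℂ} {α β : ℝ}
    (hα : L2Le (fun w => ⟪wordOp V w x, b⟫ - if w = [] then κ else 0) α) (u : List ι)
    (hβ : ∀ s, s <:+ u → s ≠ [] → ‖⟪x, wordOp V s b⟫‖ ≤ β) :
    L2Le (fun w => ⟪wordOp V w x, wordOp V u b⟫ - if w = u then κ else 0)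
      (α + u.length * β) := by
  induction u with
  | nil => simpa using hα
  | cons a u ih =>
    have h1 := ih fun s hs => hβ s (hs.trans (List.suffix_cons a u))
    refine (h1.cons (s := β) a (f := fun w => ⟪wordOp V w x, wordOp V (a :: u) b⟫ -
      if w = a :: u then κ else 0) ?_ fun c w => ?_).mono ?_
    · simpa using hβ (a :: u) List.suffix_rfl (by simp)
    · rcases eq_or_ne c a with rfl | hc
      · simp [hV c c]
      · simp [hV c a, hc]
    · simp only [List.length_cons]
      push_cast
      linarith

/-- The words `a b b ⋯ b`, which do not overlap themselves. -/
def markedWord (a b : ι) (k : ℕ) : List ι := a :: List.replicate (k + 1) b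

lemma length_markedWord (a b : ι) (k : ℕ) : k < (markedWord a b k).length := by
  simp [markedWord]

lemma IsRowIsometry.l2Le_markedWord (hV : IsRowIsometry V) {a b : ι} {x z : H} {κ : ℂ}
    {α β : ℝ} (hx : ∀ y, ⟪x, V b y⟫ = 0) (hα : L2Le (fun w => ⟪wordOp V w x, z⟫) α) (k : ℕ)
    (hβ : ‖⟪x, wordOp V (markedWord a b k) z⟫ - κ‖ ≤ β) :
    L2Le (fun w => ⟪wordOp V w x, wordOp V (markedWord a b k) z⟫ - if w = [] then κ else 0)
      (α + β) := by
  have h1 := hV.l2Le_wordOp (x := x) (b := z) (κ := 0) (by simpa using hα)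
    (List.replicate (k + 1) b) (β := 0) fun s hs hne => by
      match s, hne with
      | c :: s, _ =>
        have hc : c = b := List.eq_of_mem_replicate (hs.subset List.mem_cons_self)
        simp [hc, hx]
  refine L2Le.cons a (r := α) (s := β)
    (g := fun w => ⟪wordOp V w x, wordOp V (List.replicate (k + 1) b) z⟫)
    (by simpa using h1) (by simpa using hβ) fun c w => ?_
  rcases eq_or_ne c a with rfl | hc
  · simp [markedWord, hV c c]
  · simp [markedWord, hV c a, hc]

variable [CompleteSpace H]

lemma IsRowIsometry.star_apply (hV : IsRowIsometry V) (a b : ι) (x : H) :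
    star (V a) (V b x) = if a = b then x else 0 := by
  refine ext_inner_left ℂ fun y => ?_
  rw [ContinuousLinearMap.star_eq_adjoint, ContinuousLinearMap.adjoint_inner_right, hV]
  by_cases hab : a = b <;> simp [hab]

/-- A closed invariant subspace without wandering vectors is reducing. -/
lemma IsRowIsometry.star_mem [Fintype ι] (hV : IsRowIsometry V) {L : Submodule ℂ H}
    (hcl : IsClosed (L : Set H)) (hL : ∀ a, ∀ x ∈ L, V a x ∈ L)
    (hw : ∀ x ∈ L, ¬ IsWandering V x) (a : ι) (x : H) (hx : x ∈ L) : star (V a) x ∈ L := by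
  have : CompleteSpace L := hcl.completeSpace_coe
  set r := x - ∑ b, V b (L.starProjection (star (V b) x)) with hr
  have hstar : ∀ b, star (V b) r = star (V b) x - L.starProjection (star (V b) x) := fun b => by
    simp [hr, map_sub, map_sum, hV.star_apply]
  have hrL : r ∈ L := L.sub_mem hx
    (L.sum_mem fun b _ => hL b _ (Submodule.starProjection_apply_mem _ _))
  have horth : ∀ b, ∀ l ∈ L, ⟪r, V b l⟫ = 0 := fun b l hl => by
    rw [← ContinuousLinearMap.adjoint_inner_left, ← ContinuousLinearMap.star_eq_adjoint, hstar]
    exact Submodule.starProjection_inner_eq_zero _ l hl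
  have hr0 : r = 0 := by
    by_contra hne
    have hn : ‖((‖r‖⁻¹ : ℝ) : ℂ) • r‖ = 1 := by
      rw [norm_smul]
      simp [hne]
    have hm : ((‖r‖⁻¹ : ℝ) : ℂ) • r ∈ L := L.smul_mem _ hrL
    refine hw _ hm (hV.isWandering hn fun b w => ?_)
    rw [wordOp_cons, inner_smul_left, horth b _ (wordOp_mem hL w hm), mul_zero]
  have := hstar a
  rw [hr0, map_zero, eq_comm, sub_eq_zero] at this
  rw [this]
  exact Submodule.starProjection_apply_mem _ _

end RowIsometries
/-! ### Existence of wandering vectors -/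

section Wandering

variable {ι H : Type*} [NormedAddCommGroup H] [InnerProductSpace ℂ H]
  {V : ι → H →L[ℂ] H}

/-- One step of the iterative solution of `⟪V_w y, z⟫ = δ_{w, ∅}`. -/
lemma exists_improvement [Fintype ι] (hV : IsRowIsometry V) {a b : ι} (hab : a ≠ b)
    (hunit : ∀ y, IsBessel V y → ∀ ε > 0,
      ∃ x, IsBessel V x ∧ ‖x‖ = 1 ∧ L2Le (fun w => ⟪wordOp V w y, x⟫) ε)
    {τ : ℝ} (hτ : 0 < τ) {y z : H} (hy : IsBessel V y) (hyb : ∀ x, ⟪y, V b x⟫ = 0)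
    (hyz : L2Le (fun w => (if w = [] then 1 else 0) - ⟪wordOp V w y, z⟫) (τ ^ 2)) :
    ∃ η ζ, ‖η‖ ≤ τ ∧ ‖ζ‖ ≤ 2 * τ ∧ IsBessel V (y + η) ∧ (∀ x, ⟪y + η, V b x⟫ = 0) ∧
      L2Le (fun w => (if w = [] then 1 else 0) - ⟪wordOp V w (y + η), z + ζ⟫)
        ((τ / 2) ^ 2) := by
  set ψ : List ι → ℂ := fun w => (if w = [] then 1 else 0) - ⟪wordOp V w y, z⟫ with hψ
  obtain ⟨F, hF⟩ := hyz.exists_tail (ε := τ ^ 2 / 16) (by positivity)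
  set G : ℝ := ∑ u ∈ F, ‖ψ u‖ with hG
  have hG0 : 0 ≤ G := Finset.sum_nonneg fun _ _ => norm_nonneg _
  set l : ℝ := ((F.sup List.length : ℕ) : ℝ) with hl
  have hl0 : 0 ≤ l := Nat.cast_nonneg _
  have hlen : ∀ u ∈ F, (u.length : ℝ) ≤ l := fun u hu =>
    Nat.cast_le.2 (Finset.le_sup (f := List.length) hu)
  set Λ : ℝ := τ + G * (1 + l) + τ⁻¹ * (G * (2 + l)) + G * (G * (1 + l)) / τ ^ 2 with hΛ
  have hΛ0 : 0 < Λ := by positivity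
  set δ : ℝ := τ ^ 2 / 16 / Λ with hδ
  have hδ0 : 0 < δ := by positivity
  have hΛδ : Λ * δ = τ ^ 2 / 16 := by rw [hδ]; field_simp
  obtain ⟨x, hx, hx1, hxy⟩ := hunit y hy δ hδ0
  have hlong := length_markedWord a b
  obtain ⟨k, ⟨hkz, hkx⟩, hky⟩ := ((hx.eventually_l2Le z hlong hδ0).and
    (hx.eventually_l2Le x hlong hδ0) |>.and (hx.eventually_l2Le y hlong hδ0)).exists
  set ξ : H := wordOp V (markedWord a b k) x with hξ
  have hξ1 : ‖ξ‖ = 1 := by rw [hξ, hV.norm_wordOp, hx1]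
  have hξb : ∀ x', ⟪ξ, V b x'⟫ = 0 := fun x' => by
    rw [hξ, markedWord, wordOp_cons, hV, if_neg hab]
  have hself : L2Le (fun w => ⟪wordOp V w ξ, ξ⟫ - if w = [] then 1 else 0) δ := by
    have := hV.l2Le_markedWord (a := a) (κ := 1) (β := 0) hξb hkx k (by
      rw [← hξ, inner_self_eq_norm_sq_to_K, hξ1]
      simp)
    simpa using this
  have hselfu : ∀ u ∈ F, L2Le (fun w => ⟪wordOp V w ξ, wordOp V u ξ⟫ - if w = u then 1 else 0)
      (δ + l * δ) := fun u hu => by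
    refine (hV.l2Le_wordOp hself u (β := δ) fun s _ hs => ?_).mono ?_
    · rw [← inner_conj_symm, RCLike.norm_conj]
      simpa [hs] using hself.norm_le s
    · gcongr
      exact hlen u hu
  have hcross : L2Le (fun w => ⟪wordOp V w y, ξ⟫ - if w = [] then 0 else 0) (δ + δ) := by
    refine hV.l2Le_markedWord hyb hxy k ?_
    rw [sub_zero, ← inner_conj_symm, RCLike.norm_conj]
    simpa using hky.norm_le []
  have hcrossu : ∀ u ∈ F, L2Le (fun w => ⟪wordOp V w y, wordOp V u ξ⟫) (δ + δ + l * δ) :=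
      fun u hu => by
    have := hV.l2Le_wordOp hcross u (β := δ) fun s _ _ => by
      rw [← inner_conj_symm, RCLike.norm_conj]
      exact hky.norm_le s
    refine L2Le.mono (by simpa using this) ?_
    gcongr
    exact hlen u hu
  set θ : H := ∑ u ∈ F, ψ u • wordOp V u ξ with hθ
  have hinner : ∀ x', ⟪x', θ⟫ = ∑ u ∈ F, ψ u * ⟪x', wordOp V u ξ⟫ := fun x' => by
    rw [hθ, inner_sum]
    simp only [inner_smul_right]
  have hdiag : L2Le (fun w => ⟪wordOp V w ξ, θ⟫ - if w ∈ F then ψ w else 0)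
      (G * (δ + l * δ)) := by
    have := L2Le.sum F fun u hu => (hselfu u hu).const_mul (ψ u)
    rw [← Finset.sum_mul] at this
    refine this.of_norm_le fun w => le_of_eq ?_
    simp [hinner, mul_sub, Finset.sum_sub_distrib]
  have hoff : L2Le (fun w => ⟪wordOp V w y, θ⟫) (G * (δ + δ + l * δ)) := by
    have := L2Le.sum F fun u hu => (hcrossu u hu).const_mul (ψ u)
    rw [← Finset.sum_mul] at this
    simpa only [hinner] using this
  have hθn : ‖θ‖ ^ 2 ≤ (2 * τ ^ 2) ^ 2 := by
    have h1 : ‖θ‖ ^ 2 = ‖∑ w ∈ F, starRingEnd ℂ (ψ w) * ⟪wordOp V w ξ, θ⟫‖ := by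
      have : ⟪θ, θ⟫ = ∑ w ∈ F, starRingEnd ℂ (ψ w) * ⟪wordOp V w ξ, θ⟫ := by
        conv_lhs => rw [hθ, sum_inner, ← hθ]
        simp only [inner_smul_left]
      rw [← this, inner_self_eq_norm_sq_to_K]
      simp
    have h2 : ∀ w ∈ F, ‖⟪wordOp V w ξ, θ⟫‖ ≤ ‖ψ w‖ + G * (δ + l * δ) := fun w hw => by
      have := hdiag.norm_le w
      rw [if_pos hw] at this
      calc ‖⟪wordOp V w ξ, θ⟫‖ ≤ ‖ψ w‖ + ‖⟪wordOp V w ξ, θ⟫ - ψ w‖ := by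
            simpa using norm_add_le (ψ w) (⟪wordOp V w ξ, θ⟫ - ψ w)
        _ ≤ _ := by gcongr
    have h3 : G * (G * (δ + l * δ)) ≤ τ ^ 4 / 16 := by
      have : G * (G * (1 + l)) / τ ^ 2 * δ ≤ Λ * δ := by
        gcongr
        rw [hΛ]
        exact le_add_of_nonneg_left (by positivity)
      rw [hΛδ, div_mul_eq_mul_div, div_le_iff₀ (by positivity)] at this
      nlinarith
    calc ‖θ‖ ^ 2 ≤ ∑ w ∈ F, ‖ψ w‖ * (‖ψ w‖ + G * (δ + l * δ)) := by
          rw [h1]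
          refine (norm_sum_le _ _).trans (Finset.sum_le_sum fun w hw => ?_)
          rw [norm_mul, RCLike.norm_conj]
          exact mul_le_mul_of_nonneg_left (h2 w hw) (norm_nonneg _)
      _ = ∑ w ∈ F, ‖ψ w‖ ^ 2 + G * (G * (δ + l * δ)) := by
          simp only [mul_add, ← sq, Finset.sum_add_distrib, ← Finset.sum_mul]
          rw [← hG]
      _ ≤ (τ ^ 2) ^ 2 + τ ^ 4 / 16 := add_le_add (hyz.2 F) h3
      _ ≤ (2 * τ ^ 2) ^ 2 := by nlinarith [pow_pos hτ 4]
  have hθn' : ‖θ‖ ≤ 2 * τ ^ 2 := (sq_le_sq₀ (norm_nonneg _) (by positivity)).1 hθn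
  refine ⟨(τ : ℂ) • ξ, ((τ⁻¹ : ℝ) : ℂ) • θ, ?_, ?_, hy.add ((hx.translate _).smul _), ?_, ?_⟩
  · rw [norm_smul, hξ1, Complex.norm_real, Real.norm_of_nonneg hτ.le, mul_one]
  · rw [norm_smul, Complex.norm_real, Real.norm_of_nonneg (inv_pos.2 hτ).le,
      inv_mul_le_iff₀ hτ]
    linarith [hθn']
  · intro x'
    rw [inner_add_left, inner_smul_left, hyb, hξb, mul_zero, add_zero]
  · have hτc : (τ : ℂ) ≠ 0 := by exact_mod_cast hτ.ne'
    have hall := ((hF.sub (hkz.const_mul (τ : ℂ))).sub hdiag).sub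
      (hoff.const_mul ((τ⁻¹ : ℝ) : ℂ))
    refine (hall.of_norm_le fun w => le_of_eq ?_).mono ?_
    · congr 1
      simp only [map_add, map_smul, inner_add_left, inner_add_right, inner_smul_left,
        inner_smul_right, Complex.conj_ofReal]
      rw [show ψ w = (if w = [] then 1 else 0) - ⟪wordOp V w y, z⟫ from rfl]
      push_cast
      rw [mul_add, ← mul_assoc ((τ : ℂ)⁻¹) (τ : ℂ), inv_mul_cancel₀ hτc]
      split_ifs <;> ring
    · rw [Complex.norm_real, Complex.norm_real, Real.norm_of_nonneg hτ.le,
        Real.norm_of_nonneg (inv_pos.2 hτ).le]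
      have h4 : τ * δ + G * (δ + l * δ) + τ⁻¹ * (G * (δ + δ + l * δ)) ≤ Λ * δ := by
        have : 0 ≤ G * (G * (1 + l)) / τ ^ 2 * δ := by positivity
        rw [hΛ]
        linarith
      rw [hΛδ] at h4
      nlinarith

variable [CompleteSpace H]

lemma inner_wordOp_cons (a : ι) (w : List ι) (y z : H) :
    ⟪wordOp V (a :: w) y, z⟫ = ⟪wordOp V w y, star (V a) z⟫ := by
  rw [wordOp_cons, ContinuousLinearMap.star_eq_adjoint, ContinuousLinearMap.adjoint_inner_right]

/-- For a defect free row-isometry, `z ↦ (⟪V_w y, z⟫)_w` is not bounded below on a nonzero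
co-invariant subspace. -/
lemma IsBessel.not_boundedBelow [Fintype ι] (hdef : ∀ x, ∑ a, ‖star (V a) x‖ ^ 2 = ‖x‖ ^ 2)
    {y : H} (hy : IsBessel V y) {L : Submodule ℂ H} (hL : ∀ a, ∀ x ∈ L, star (V a) x ∈ L)
    (hne : L ≠ ⊥) {ε : ℝ} (hε : 0 < ε) :
    ∃ x ∈ L, ∃ r, L2Le (fun w => ⟪wordOp V w y, x⟫) r ∧ r < ε * ‖x‖ := by
  by_contra! hcon
  obtain ⟨C, -, hC⟩ := hy
  let T : ℕ → H → ℝ := fun k z =>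
    ∑' w : List ι, ‖if k ≤ w.length then ⟪wordOp V w y, z⟫ else 0‖ ^ 2
  have hTle : ∀ k z, L2Le (fun w : List ι => if k ≤ w.length then ⟪wordOp V w y, z⟫ else 0)
      (C * ‖z‖) := fun k z => (hC z).of_norm_le fun w => by split_ifs <;> simp
  have hsucc : ∀ k z, T (k + 1) z = ∑ a, T k (star (V a) z) := fun k z => by
    have hg : Function.Injective fun p : ι × List ι => p.1 :: p.2 := fun p q h => by
      simpa [Prod.ext_iff] using h
    have hsum := (hTle (k + 1) z).comp_injective hg |>.summable
    have hsupp : (Function.support fun w : List ι =>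
        ‖if k + 1 ≤ w.length then ⟪wordOp V w y, z⟫ else 0‖ ^ 2) ⊆
        Set.range fun p : ι × List ι => p.1 :: p.2 := fun w hw => by
      match w with
      | [] => simp at hw
      | a :: w => exact ⟨(a, w), rfl⟩
    calc T (k + 1) z = ∑' p : ι × List ι,
          ‖if k + 1 ≤ (p.1 :: p.2).length then ⟪wordOp V (p.1 :: p.2) y, z⟫ else 0‖ ^ 2 :=
          (hg.tsum_eq hsupp).symm
      _ = ∑ a, T k (star (V a) z) := by
          rw [hsum.tsum_prod, tsum_fintype]
          refine Finset.sum_congr rfl fun a _ => tsum_congr fun w => ?_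
          simp only [List.length_cons, add_le_add_iff_right, inner_wordOp_cons]
  have hbound : ∀ k, ∀ z ∈ L, ε ^ 2 * ‖z‖ ^ 2 ≤ T k z := fun k => by
    induction k with
    | zero =>
      intro z hz
      have hT : 0 ≤ T 0 z := tsum_nonneg fun _ => sq_nonneg _
      have h1 := hcon z hz (√(T 0 z)) ⟨Real.sqrt_nonneg _, fun F => by
        rw [Real.sq_sqrt hT]
        simpa [T] using (hC z).summable.sum_le_tsum F fun _ _ => sq_nonneg _⟩
      calc ε ^ 2 * ‖z‖ ^ 2 = (ε * ‖z‖) ^ 2 := by ring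
        _ ≤ √(T 0 z) ^ 2 := pow_le_pow_left₀ (by positivity) h1 2
        _ = T 0 z := Real.sq_sqrt hT
    | succ k ih =>
      intro z hz
      rw [hsucc, ← hdef z, Finset.mul_sum]
      exact Finset.sum_le_sum fun a _ => ih _ (hL a z hz)
  obtain ⟨z, hz, hz0⟩ := L.ne_bot_iff.1 hne
  have hzn : 0 < ‖z‖ := norm_pos_iff.2 hz0
  obtain ⟨F, hF⟩ := (hC z).exists_tail (ε := ε * ‖z‖ / 2) (by positivity)
  have htail : T (F.sup List.length + 1) z ≤ (ε * ‖z‖ / 2) ^ 2 := by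
    refine (hF.of_norm_le fun w => ?_).tsum_le
    by_cases hw : w ∈ F
    · have : w.length ≤ F.sup List.length := Finset.le_sup (f := List.length) hw
      simp [hw, Nat.not_le.2 (Nat.lt_succ_of_le this)]
    · rw [if_neg hw]
      split_ifs <;> simp
  have := (hbound _ z hz).trans htail
  nlinarith [mul_pos hε hzn]

lemma IsBessel.exists_unit_l2Le [Fintype ι]
    (hdef : ∀ x, ∑ a, ‖star (V a) x‖ ^ 2 = ‖x‖ ^ 2)
    (hL : ∀ a, ∀ x ∈ (besselSubmodule V).topologicalClosure,
      star (V a) x ∈ (besselSubmodule V).topologicalClosure)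
    (hne : besselSubmodule V ≠ ⊥) {y : H} (hy : IsBessel V y) {ε : ℝ} (hε : 0 < ε) :
    ∃ x, IsBessel V x ∧ ‖x‖ = 1 ∧ L2Le (fun w => ⟪wordOp V w y, x⟫) ε := by
  have hne' : (besselSubmodule V).topologicalClosure ≠ ⊥ := fun h =>
    hne (eq_bot_iff.2 ((besselSubmodule V).le_topologicalClosure.trans h.le))
  obtain ⟨x, hx, r, hr, hrx⟩ := hy.not_boundedBelow hdef hL hne' hε
  obtain ⟨C, hC0, hC⟩ := hy
  have hx' : x ∈ closure ((besselSubmodule V : Submodule ℂ H) : Set H) := hx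
  obtain ⟨x', hxB, hd⟩ := Metric.mem_closure_iff.1 hx' ((ε * ‖x‖ - r) / (C + ε + 1))
    (div_pos (by linarith) (by positivity))
  rw [lt_div_iff₀ (by positivity), dist_eq_norm] at hd
  have h1 : L2Le (fun w => ⟪wordOp V w y, x'⟫) (r + C * ‖x - x'‖) := by
    simpa [inner_sub_right] using hr.sub (hC (x - x'))
  have h2 : ‖x‖ ≤ ‖x'‖ + ‖x - x'‖ := by
    simpa using norm_add_le x' (x - x')
  have h3 : r + C * ‖x - x'‖ ≤ ε * ‖x'‖ := by
    nlinarith [mul_le_mul_of_nonneg_left h2 hε.le, norm_nonneg (x - x')]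
  have hx0 : 0 < ‖x'‖ := by
    by_contra h
    have h0 : ‖x'‖ = 0 := le_antisymm (not_lt.1 h) (norm_nonneg _)
    rw [h0, mul_zero] at h3
    nlinarith [hr.1, norm_nonneg (x - x'), mul_nonneg hC0 (norm_nonneg (x - x')),
      mul_le_mul_of_nonneg_left h2 hε.le]
  refine ⟨((‖x'‖⁻¹ : ℝ) : ℂ) • x', IsBessel.smul hxB _, ?_, ?_⟩
  · rw [norm_smul]
    simp [hx0.ne']
  · simp only [inner_smul_right]
    refine (h1.const_mul _).mono ?_
    rw [Complex.norm_real, norm_inv, norm_norm, inv_mul_le_iff₀ hx0]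
    linarith

/-- **Wandering vectors**: a defect free row-isometry with at least two components and a nonzero
Bessel vector has a wandering vector. -/
theorem IsRowIsometry.exists_isWandering [Fintype ι] (hV : IsRowIsometry V)
    (hdef : ∀ x, ∑ a, ‖star (V a) x‖ ^ 2 = ‖x‖ ^ 2) {a b : ι} (hab : a ≠ b)
    {x₀ : H} (hx₀ : IsBessel V x₀) (hne : x₀ ≠ 0) : ∃ x, IsWandering V x := by
  by_contra! hno
  have hBcl : ∀ c, ∀ x ∈ (besselSubmodule V).topologicalClosure,
      V c x ∈ (besselSubmodule V).topologicalClosure := fun c x hx =>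
    map_mem_closure (V c).continuous hx fun u hu => by
      show IsBessel V (V c u)
      simpa using IsBessel.translate hu [c]
  have hunit : ∀ y, IsBessel V y → ∀ ε > 0,
      ∃ x, IsBessel V x ∧ ‖x‖ = 1 ∧ L2Le (fun w => ⟪wordOp V w y, x⟫) ε := fun y hy ε hε =>
    hy.exists_unit_l2Le hdef
      (hV.star_mem (Submodule.isClosed_topologicalClosure _) hBcl fun x _ => hno x)
      ((Submodule.ne_bot_iff _).2 ⟨x₀, hx₀, hne⟩) hε
  let Inv : ℕ → H × H → Prop := fun m p => IsBessel V p.1 ∧ (∀ x, ⟪p.1, V b x⟫ = 0) ∧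
    L2Le (fun w => (if w = [] then 1 else 0) - ⟪wordOp V w p.1, p.2⟫) (((1 / 2 : ℝ) ^ m) ^ 2)
  have hstep : ∀ m (p : {p // Inv m p}), ∃ q : {q // Inv (m + 1) q},
      dist p.1 q.1 ≤ 2 * (1 / 2 : ℝ) ^ m := fun m ⟨p, h1, h2, h3⟩ => by
    obtain ⟨η, ζ, hη, hζ, h4, h5, h6⟩ :=
      exists_improvement hV hab hunit (τ := (1 / 2 : ℝ) ^ m) (by positivity) h1 h2 h3
    refine ⟨⟨(p.1 + η, p.2 + ζ), h4, h5, ?_⟩, ?_⟩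
    · rw [pow_succ (1 / 2 : ℝ) m, mul_one_div]
      exact h6
    · rw [Prod.dist_eq]
      simp only [dist_self_add_right]
      exact max_le (hη.trans (by linarith [show (0 : ℝ) < (1 / 2) ^ m by positivity])) hζ
  choose next hnext using hstep
  have hinit : Inv 0 (0, 0) := by
    refine ⟨isBessel_zero, by simp, ?_⟩
    have := (L2Le.zero (α := List ι)).cons (f := fun w => if w = [] then 1 else 0) (s := 1) a
      (by simp) (by simp)
    simpa using this
  let S : (m : ℕ) → {p // Inv m p} := fun m => Nat.rec ⟨(0, 0), hinit⟩ next m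
  have hcauchy : CauchySeq fun m => (S m).1 :=
    cauchySeq_of_le_geometric (1 / 2) 2 (by norm_num) fun m => hnext m (S m)
  obtain ⟨⟨y, z⟩, hlim⟩ := cauchySeq_tendsto_of_complete hcauchy
  have hyz : ∀ w, ⟪wordOp V w y, z⟫ = if w = [] then 1 else 0 := fun w => by
    have h1 : Filter.Tendsto (fun m => (if w = [] then 1 else 0) -
        ⟪wordOp V w (S m).1.1, (S m).1.2⟫) Filter.atTop
        (nhds ((if w = [] then 1 else 0) - ⟪wordOp V w y, z⟫)) :=
      tendsto_const_nhds.sub ((((wordOp V w).continuous.tendsto _).comp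
        ((continuous_fst.tendsto _).comp hlim)).inner ((continuous_snd.tendsto _).comp hlim))
    have h2 : Filter.Tendsto (fun m : ℕ => ((1 / 2 : ℝ) ^ m) ^ 2) Filter.atTop (nhds 0) := by
      have := (tendsto_pow_atTop_nhds_zero_of_lt_one (r := (1 / 2 : ℝ)) (by norm_num)
        (by norm_num)).pow 2
      simpa using this
    have h3 := squeeze_zero_norm (fun m => (S m).2.2.2.norm_le w) h2
    exact (sub_eq_zero.1 (tendsto_nhds_unique h1 h3)).symm
  let L : Submodule ℂ H :=
    { carrier := {x | ∀ w, ⟪wordOp V w x, z⟫ = 0}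
      add_mem' := fun hx hy w => by rw [map_add, inner_add_left, hx w, hy w, add_zero]
      zero_mem' := fun w => by simp
      smul_mem' := fun t x hx w => by rw [map_smul, inner_smul_left, hx w, mul_zero] }
  have hLcl : IsClosed (L : Set H) := by
    have : (L : Set H) = ⋂ w, {x | ⟪wordOp V w x, z⟫ = 0} := by
      ext x
      simp [L]
    rw [this]
    exact isClosed_iInter fun w => isClosed_eq (by fun_prop) continuous_const
  have hLinv : ∀ c, ∀ x ∈ L, V c x ∈ L := fun c x hx w => by
    simpa [wordOp_append] using hx (w ++ [c])
  have hmem : V a y ∈ L := fun w => by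
    simpa [wordOp_append] using hyz (w ++ [a])
  have hyL : y ∈ L := by
    simpa [hV.star_apply] using hV.star_mem hLcl hLinv (fun x _ => hno x) a _ hmem
  have h0 := hyL []
  rw [hyz] at h0
  simp at h0

end Wandering
/-! ### Ampliations and self-adjointness -/

section Ampliation

variable {ι κ H : Type*} [NormedAddCommGroup H] [InnerProductSpace ℂ H] [Fintype κ]

/-- The diagonal operator `T ⊕ ⋯ ⊕ T` on `H ⊕ ⋯ ⊕ H`. -/
def ampliation (κ : Type*) [Fintype κ] (T : H →L[ℂ] H) :
    PiLp 2 (fun _ : κ => H) →L[ℂ] PiLp 2 (fun _ : κ => H) :=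
  (PiLp.continuousLinearEquiv 2 ℂ fun _ : κ => H).symm.toContinuousLinearMap ∘L
    (ContinuousLinearMap.pi fun i => T ∘L PiLp.proj 2 (fun _ : κ => H) i)

@[simp] lemma ampliation_apply (T : H →L[ℂ] H) (x : PiLp 2 (fun _ : κ => H)) (i : κ) :
    ampliation κ T x i = T (x i) := rfl

variable {V : ι → H →L[ℂ] H}

lemma wordOp_ampliation (w : List ι) (x : PiLp 2 (fun _ : κ => H)) (i : κ) :
    wordOp (fun a => ampliation κ (V a)) w x i = wordOp V w (x i) := by
  induction w with
  | nil => simp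
  | cons a w ih => simp [ih]

lemma IsRowIsometry.isRowIsometry_ampliation (hV : IsRowIsometry V) :
    IsRowIsometry fun a => ampliation κ (V a) := fun a b x y => by
  simp only [PiLp.inner_apply, ampliation_apply, hV a b]
  split_ifs <;> simp

/-- The components of a wandering vector for the ampliation are Bessel vectors. -/
lemma IsWandering.isBessel_apply {x : PiLp 2 (fun _ : κ => H)}
    (hx : IsWandering (fun a => ampliation κ (V a)) x) (i : κ) : IsBessel V (x i) := by
  refine ⟨1, zero_le_one, fun z => ?_⟩
  have := hx.l2Le (PiLp.single 2 i z)
  have hz : ∀ y : PiLp 2 (fun _ : κ => H), ⟪y, PiLp.single 2 i z⟫ = ⟪y i, z⟫ := fun y => by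
    rw [PiLp.inner_apply, Finset.sum_eq_single i] <;> simp +contextual
  simpa [hz, wordOp_ampliation] using this

variable [CompleteSpace H]

lemma star_ampliation (T : H →L[ℂ] H) : star (ampliation κ T) = ampliation κ (star T) := by
  rw [ContinuousLinearMap.star_eq_adjoint, eq_comm, ContinuousLinearMap.eq_adjoint_iff]
  intro x y
  simp [PiLp.inner_apply, ContinuousLinearMap.star_eq_adjoint,
    ContinuousLinearMap.adjoint_inner_left]

/-- Adjoints of polynomials in a row-isometry without wandering vectors are strong limits of
polynomials. -/
lemma IsRowIsometry.exists_approx_star [Fintype ι] (hV : IsRowIsometry V)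
    (hdef : ∀ x, ∑ a, ‖star (V a) x‖ ^ 2 = ‖x‖ ^ 2) {a b : ι} (hab : a ≠ b)
    (hno : ∀ x, ¬ IsWandering V x) {B : H →L[ℂ] H} (hB : B ∈ Algebra.adjoin ℂ (Set.range V))
    (x : κ → H) {ε : ℝ} (hε : 0 < ε) :
    ∃ p ∈ Algebra.adjoin ℂ (Set.range V), ∀ i, ‖(star B - p) (x i)‖ < ε := by
  have hno' : ∀ y, ¬ IsWandering (fun a => ampliation κ (V a)) y := fun y hy => by
    have hy0 : y ≠ 0 := norm_ne_zero_iff.1 (by simp [hy.1])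
    obtain ⟨i, hi⟩ : ∃ i, y i ≠ 0 := by
      by_contra! h
      exact hy0 (PiLp.ext h)
    obtain ⟨u, hu⟩ := hV.exists_isWandering hdef hab (hy.isBessel_apply i) hi
    exact hno u hu
  let L₀ : Submodule ℂ (PiLp 2 fun _ : κ => H) :=
    { carrier := {y | ∃ p ∈ Algebra.adjoin ℂ (Set.range V), ∀ i, y i = p (x i)}
      add_mem' := by
        rintro y z ⟨p, hp, hy⟩ ⟨q, hq, hz⟩
        exact ⟨p + q, add_mem hp hq, fun i => by simp [hy, hz]⟩
      zero_mem' := ⟨0, zero_mem _, fun i => by simp⟩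
      smul_mem' := by
        rintro t y ⟨p, hp, hy⟩
        exact ⟨t • p, Subalgebra.smul_mem _ hp t, fun i => by simp [hy]⟩ }
  have hinv : ∀ c, ∀ y ∈ L₀.topologicalClosure, ampliation κ (V c) y ∈ L₀.topologicalClosure :=
    fun c y hy => map_mem_closure (ampliation κ (V c)).continuous hy fun u ⟨p, hp, hu⟩ =>
      ⟨V c * p, mul_mem (Algebra.subset_adjoin ⟨c, rfl⟩) hp, fun i => by simp [hu]⟩
  have hstar := hV.isRowIsometry_ampliation.star_mem (Submodule.isClosed_topologicalClosure _) hinv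
    fun y _ => hno' y
  have hBinv : ∀ y ∈ L₀.topologicalClosure, ampliation κ (star B) y ∈ L₀.topologicalClosure := by
    induction hB using Algebra.adjoin_induction with
    | mem T hT =>
      obtain ⟨c, rfl⟩ := hT
      simpa only [← star_ampliation] using hstar c
    | algebraMap t =>
      intro y hy
      convert L₀.topologicalClosure.smul_mem (starRingEnd ℂ t) hy using 1
      ext i
      simp [Algebra.algebraMap_eq_smul_one]
    | add S T _ _ hS hT =>
      intro y hy
      convert add_mem (hS y hy) (hT y hy) using 1
      ext i
      simp
    | mul S T _ _ hS hT =>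
      intro y hy
      convert hT _ (hS y hy) using 1
      ext i
      simp
  have hx : WithLp.toLp 2 x ∈ L₀.topologicalClosure :=
    L₀.le_topologicalClosure ⟨1, one_mem _, fun i => by simp⟩
  obtain ⟨y, ⟨p, hp, hy⟩, hd⟩ := Metric.mem_closure_iff.1 (hBinv _ hx) ε hε
  refine ⟨p, hp, fun i => lt_of_le_of_lt ?_ hd⟩
  rw [dist_eq_norm]
  refine le_trans (le_of_eq ?_) (PiLp.norm_apply_le _ i)
  simp [hy]

/-- A defect free row-isometry with at least two components and without wandering vectors
generates a self-adjoint algebra. -/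
theorem IsRowIsometry.star_mem_genWotAlg [Fintype ι] (hV : IsRowIsometry V)
    (hdef : ∀ x, ∑ a, ‖star (V a) x‖ ^ 2 = ‖x‖ ^ 2) {a b : ι} (hab : a ≠ b)
    (hno : ∀ x, ¬ IsWandering V x) {A : H →L[ℂ] H} (hA : A ∈ genWotAlg (Set.range V)) :
    star A ∈ genWotAlg (Set.range V) := by
  intro ε hε F
  obtain ⟨B, hB, hAB⟩ := hA (ε / 2) (half_pos hε) (F.image Prod.swap)
  set C : ℝ := ∑ p ∈ F, ‖p.1‖ + 1 with hC
  have hC0 : 0 < C := by positivity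
  obtain ⟨P, hP, hBP⟩ := hV.exists_approx_star hdef hab hno hB (fun p : F => p.1.2)
    (ε := ε / 2 / C) (by positivity)
  refine ⟨P, hP, fun p hp => ?_⟩
  have h1 : ‖⟪p.1, (star A - star B) p.2⟫‖ < ε / 2 := by
    rw [← star_sub, ContinuousLinearMap.star_eq_adjoint,
      ContinuousLinearMap.adjoint_inner_right, ← inner_conj_symm, RCLike.norm_conj]
    exact hAB p.swap (Finset.mem_image_of_mem _ hp)
  have h2 : ‖⟪p.1, (star B - P) p.2⟫‖ ≤ ε / 2 := by
    have hpC : ‖p.1‖ ≤ C := by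
      have := Finset.single_le_sum (f := fun p : H × H => ‖p.1‖) (fun _ _ => norm_nonneg _) hp
      linarith
    calc ‖⟪p.1, (star B - P) p.2⟫‖ ≤ ‖p.1‖ * ‖(star B - P) p.2‖ := norm_inner_le_norm _ _
      _ ≤ C * (ε / 2 / C) := by
        gcongr
        exact (hBP ⟨p, hp⟩).le
      _ = ε / 2 := by field_simp
  calc ‖⟪p.1, (star A - P) p.2⟫‖
      = ‖⟪p.1, (star A - star B) p.2⟫ + ⟪p.1, (star B - P) p.2⟫‖ := by
        rw [← inner_add_right, ← add_apply, sub_add_sub_cancel]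
    _ < ε := by linarith [norm_add_le ⟪p.1, (star A - star B) p.2⟫ ⟪p.1, (star B - P) p.2⟫]

end Ampliation

section Restriction

variable {ι H : Type*} [NormedAddCommGroup H] [InnerProductSpace ℂ H] {V : ι → H →L[ℂ] H}
  {M : Submodule ℂ H}

lemma coe_restrictCLM {A : H →L[ℂ] H} (h : ∀ x ∈ M, A x ∈ M) (x : M) :
    (restrictCLM A M x : H) = A x := by
  rw [restrictCLM, dif_pos h]
  rfl

lemma coe_wordOp_restrictCLM (h : ∀ a, ∀ x ∈ M, V a x ∈ M) (w : List ι) (x : M) :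
    (wordOp (fun a => restrictCLM (V a) M) w x : H) = wordOp V w x := by
  induction w with
  | nil => simp
  | cons a w ih => simp [coe_restrictCLM (h a), ih]

/-- The restriction of a defect free row-isometry to a closed invariant subspace without
wandering vectors generates a self-adjoint algebra. -/
lemma IsRowIsometry.restricted_selfAdjoint [CompleteSpace H] [Fintype ι] (hV : IsRowIsometry V)
    (hdef : ∀ x, ∑ a, ‖star (V a) x‖ ^ 2 = ‖x‖ ^ 2) {a b : ι} (hab : a ≠ b)
    (hcl : IsClosed (M : Set H)) (hM : ∀ a, ∀ x ∈ M, V a x ∈ M)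
    (hno : ∀ x ∈ M, ¬ IsWandering V x) : restrictedAlgSelfAdjoint V M := by
  have : CompleteSpace M := hcl.completeSpace_coe
  have hstar : ∀ c (x : M), ((star (restrictCLM (V c) M) x : M) : H) = star (V c) x :=
      fun c x => by
    have hx := hV.star_mem hcl hM hno c x x.2
    refine congrArg Subtype.val (show _ = (⟨_, hx⟩ : M) from ext_inner_left ℂ fun y => ?_)
    rw [ContinuousLinearMap.star_eq_adjoint, ContinuousLinearMap.adjoint_inner_right,
      Submodule.coe_inner, Submodule.coe_inner, coe_restrictCLM (hM c)]
    simp only [ContinuousLinearMap.star_eq_adjoint, ContinuousLinearMap.adjoint_inner_right]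
  have hU : IsRowIsometry fun a => restrictCLM (V a) M := fun c d x y => by
    rw [Submodule.coe_inner, coe_restrictCLM (hM c), coe_restrictCLM (hM d), hV,
      Submodule.coe_inner]
  have hUdef : ∀ x : M, ∑ c, ‖star (restrictCLM (V c) M) x‖ ^ 2 = ‖x‖ ^ 2 := fun x => by
    simpa only [Submodule.coe_norm, hstar] using hdef x
  have hUno : ∀ x : M, ¬ IsWandering (fun a => restrictCLM (V a) M) x := fun x hx =>
    hno x x.2 ⟨hx.1, fun w w' => by
      simpa only [Submodule.coe_inner, coe_wordOp_restrictCLM hM] using hx.2 w w'⟩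
  intro A hA
  refine ⟨star A, hU.star_mem_genWotAlg hUdef hab hUno hA, fun x y => ?_⟩
  rw [← Submodule.coe_inner, ← Submodule.coe_inner, ContinuousLinearMap.star_eq_adjoint,
    ContinuousLinearMap.adjoint_inner_right]

end Restriction

/-- For a row-isometry of dilation type, no nonzero vector in the range of the structure
projection has its entire forward orbit in that range. -/
theorem statement9 {K : Type*} [NormedAddCommGroup K] [InnerProductSpace ℂ K]
    [CompleteSpace K] {N : ℕ} (hN : 2 ≤ N) (V : Fin N → K →L[ℂ] K)
    (hiso : ∀ a b, star (V a) * V b = if a = b then 1 else 0)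
    (hdil : IsDilationType V) :
    ∀ v : K, v ∈ ((Submodule.span ℂ {ζ : K | IsWandering V ζ}).topologicalClosure)ᗮ →
      v ≠ 0 → ∃ w : List (Fin N),
        wordOp V w v ∉ ((Submodule.span ℂ {ζ : K | IsWandering V ζ}).topologicalClosure)ᗮ := by
  have hV : IsRowIsometry V := fun a b x y => by
    rw [← ContinuousLinearMap.adjoint_inner_right, ← ContinuousLinearMap.star_eq_adjoint,
      ← mul_apply_eq_comp, hiso]
    split_ifs <;> simp
  have hdef : ∀ x, ∑ a, ‖star (V a) x‖ ^ 2 = ‖x‖ ^ 2 := fun x => by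
    have h : ∑ a, ⟪x, V a (star (V a) x)⟫ = ⟪x, x⟫ := by
      simpa [inner_sum] using congrArg (fun T : K →L[ℂ] K => ⟪x, T x⟫) hdil.1
    simp only [← ContinuousLinearMap.adjoint_inner_left, ← ContinuousLinearMap.star_eq_adjoint,
      inner_self_eq_norm_sq_to_K] at h
    exact_mod_cast h
  intro v hv hv0
  by_contra! hcon
  set W : Submodule ℂ K := (Submodule.span ℂ {ζ : K | IsWandering V ζ}).topologicalClosure
    with hW
  let M : Submodule ℂ K := ⨅ w, Wᗮ.comap (wordOp V w).toLinearMap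
  have hmem : ∀ x, x ∈ M ↔ ∀ w, wordOp V w x ∈ Wᗮ := fun x => by simp [M]
  have hcl : IsClosed (M : Set K) := by
    have : (M : Set K) = ⋂ w, wordOp V w ⁻¹' (Wᗮ : Set K) := by
      ext x
      simp [hmem]
    rw [this]
    exact isClosed_iInter fun w => W.isClosed_orthogonal.preimage (wordOp V w).continuous
  have hM : ∀ a, ∀ x ∈ M, V a x ∈ M := fun a x hx => (hmem _).2 fun w => by
    simpa [wordOp_append] using (hmem x).1 hx (w ++ [a])
  have hno : ∀ x ∈ M, ¬ IsWandering V x := fun x hx hxw => by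
    have h1 : x ∈ W := Submodule.le_topologicalClosure _ (Submodule.subset_span hxw)
    have h2 : x ∈ Wᗮ := by simpa using (hmem x).1 hx []
    have h3 := hxw.1
    rw [inner_self_eq_zero.1 (h2 x h1), norm_zero] at h3
    exact zero_ne_one h3
  have hab : (⟨0, by omega⟩ : Fin N) ≠ ⟨1, by omega⟩ := by simp
  exact hdil.2 ⟨M, M.ne_bot_iff.2 ⟨v, (hmem v).2 hcon, hv0⟩, hcl, hM, hV.star_mem hcl hM hno,
    Or.inr (hV.restricted_selfAdjoint hdef hab hcl hM hno)⟩
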